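/- (Cayley's formula, via Prüfer's theorem.) For every integer n ≥ 2, the number of simple graphs on the vertex set Fin n that are trees (connected and acyclic) equals n^{n−2}. -/

import Mathlib

/-!
In a Prüfer code of a tree on `n` vertices, that is, a word of length `n - 2` in the vertices, each
vertex `v` occurs `deg v - 1` times; in particular the leaves are the vertices that do not occur.
Fix a vertex `m`. A tree in which `m` is a leaf amounts to a tree on the other vertices together
with the neighbour `w` of `m`, and a word omitting `m` amounts to a shorter word in the other
vertices together with its first letter `w`. In both cases adding `m` raises the degree of `w` by
one and keeps the others, so by induction the trees with leaf `m` correspond to the words omitting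
`m`, preserving degrees. Every tree has a leaf and every word of length `n - 2` omits some vertex;
as the degrees determine which vertices are leaves, these correspondences for the various `m`
combine into a bijection between all trees and all words.
-/

open SimpleGraph Finset

/-- The trees with vertex set `V`. -/
abbrev LabelledTree (V : Type*) := {T : SimpleGraph V // T.IsTree}

section Gluing

variable {ι α β γ : Type*}

/- An equivalence preserving the statistic matches it fibre by fibre, so for each value of the
statistic any one of the given equivalences that covers this value can be used. -/
theorem exists_equiv_comp_eq_of_forall_subtype {f : α → γ} {g : β → γ} (P : ι → γ → Prop)
    (hf : ∀ a, ∃ i, P i (f a)) (hg : ∀ b, ∃ i, P i (g b))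
    (h : ∀ i, ∃ e : {a // P i (f a)} ≃ {b // P i (g b)}, ∀ a, g (e a) = f a) :
    ∃ e : α ≃ β, ∀ a, g (e a) = f a := by
  suffices fiber : ∀ c, Nonempty ({a // f a = c} ≃ {b // g b = c}) from
    ⟨.ofFiberEquiv fun c ↦ (fiber c).some, Equiv.ofFiberEquiv_map _⟩
  intro c
  by_cases hc : ∃ i, P i c
  · obtain ⟨i, hi⟩ := hc
    obtain ⟨e, he⟩ := h i
    have restrict : {a : {a // P i (f a)} // f a = c} ≃ {b : {b // P i (g b)} // g b = c} :=
      e.subtypeEquiv fun a ↦ by rw [he]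
    exact ⟨(Equiv.subtypeSubtypeEquivSubtype fun {a} (h : f a = c) ↦ h ▸ hi).symm.trans <|
      restrict.trans <| Equiv.subtypeSubtypeEquivSubtype fun {b} (h : g b = c) ↦ h ▸ hi⟩
  · have : IsEmpty {a // f a = c} := ⟨fun a ↦ hc (a.2 ▸ hf a)⟩
    have : IsEmpty {b // g b = c} := ⟨fun b ↦ hc (b.2 ▸ hg b)⟩
    exact ⟨Equiv.equivOfIsEmpty _ _⟩

end Gluing

section Leaf

variable {V : Type*} {m : V}

theorem card_compl_singleton_add_one [Fintype V] (m : V) [Fintype ({m}ᶜ : Set V)] :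
    Fintype.card ({m}ᶜ : Set V) + 1 = Fintype.card V := by
  classical
  have := Fintype.card_pos_iff.mpr ⟨m⟩
  rw [Fintype.card_compl_set, Set.card_singleton, Nat.sub_add_cancel this]

theorem connected_of_connected_induce_compl_singleton {G : SimpleGraph V} {w : V}
    (hw : G.Adj m w) (h : (G.induce {m}ᶜ).Connected) : G.Connected := by
  refine connected_iff_exists_forall_reachable G |>.mpr ⟨w, fun v ↦ ?_⟩
  obtain rfl | hv := eq_or_ne v m
  · exact hw.reachable.symm
  · exact (h ⟨w, hw.ne'⟩ ⟨v, hv⟩).map (Embedding.induce _).toHom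

theorem isTree_induce_compl_singleton_iff [Fintype V] {G : SimpleGraph V} [DecidableRel G.Adj]
    (hm : G.degree m = 1) : (G.induce {m}ᶜ).IsTree ↔ G.IsTree := by
  classical
  have connected_iff : (G.induce {m}ᶜ).Connected ↔ G.Connected := by
    obtain ⟨w, hw, -⟩ := degree_eq_one_iff_existsUnique_adj.mp hm
    exact ⟨connected_of_connected_induce_compl_singleton hw,
      fun h ↦ h.induce_compl_singleton_of_degree_eq_one hm⟩
  have card_edges : #(G.induce {m}ᶜ).edgeFinset + 1 = #G.edgeFinset := by
    have := G.degree_le_card_edgeFinset m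
    rw [card_edgeFinset_induce_compl_singleton, card_edgeFinset_deleteIncidenceSet]
    lia
  simp only [isTree_iff_connected_and_card, connected_iff, Nat.card_eq_fintype_card,
    ← edgeFinset_card, ← card_edges, ← card_compl_singleton_add_one m, add_left_inj]

/-- The graph obtained from a graph `G` on the vertices other than `m` by joining `m` to the
single vertex `w`. -/
def attachLeaf (G : SimpleGraph ({m}ᶜ : Set V)) (w : ({m}ᶜ : Set V)) : SimpleGraph V :=
  G.spanningCoe ⊔ edge m w

variable {G : SimpleGraph ({m}ᶜ : Set V)} {w : ({m}ᶜ : Set V)}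

theorem attachLeaf_adj_leaf {v : V} : (attachLeaf G w).Adj m v ↔ v = w := by
  have := w.2
  simp only [attachLeaf, sup_adj, edge_adj, map_adj, Function.Embedding.subtype_apply]
  grind

theorem attachLeaf_adj_coe {u v : ({m}ᶜ : Set V)} : (attachLeaf G w).Adj u v ↔ G.Adj u v := by
  have := u.2
  have := v.2
  simp only [attachLeaf, sup_adj, edge_adj, map_adj, Function.Embedding.subtype_apply]
  grind

theorem induce_attachLeaf : (attachLeaf G w).induce {m}ᶜ = G := by
  ext u v
  exact attachLeaf_adj_coe

theorem attachLeaf_injective2 : Function.Injective2 (attachLeaf (m := m)) := by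
  intro G H w x h
  refine ⟨by rw [← induce_attachLeaf (G := G) (w := w), h, induce_attachLeaf], Subtype.ext ?_⟩
  rw [← attachLeaf_adj_leaf (G := H), ← h, attachLeaf_adj_leaf]

theorem attachLeaf_induce {G : SimpleGraph V} (h : ∀ v, G.Adj m v ↔ v = w) :
    attachLeaf (G.induce {m}ᶜ) w = G := by
  ext u v
  by_cases hu : u = m
  · rw [hu, attachLeaf_adj_leaf, h]
  by_cases hv : v = m
  · rw [hv, adj_comm, attachLeaf_adj_leaf, adj_comm, h]
  exact attachLeaf_adj_coe (u := ⟨u, hu⟩) (v := ⟨v, hv⟩)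

theorem degree_attachLeaf_leaf [Fintype ((attachLeaf G w).neighborSet m)] :
    (attachLeaf G w).degree m = 1 :=
  degree_eq_one_iff_existsUnique_adj.mpr ⟨w, attachLeaf_adj_leaf.mpr rfl,
    fun _ ↦ attachLeaf_adj_leaf.mp⟩

theorem degree_attachLeaf_coe [DecidableEq V] (v : ({m}ᶜ : Set V)) [Fintype (G.neighborSet v)]
    [Fintype ((attachLeaf G w).neighborSet v)] :
    (attachLeaf G w).degree v = G.degree v + if w = v then 1 else 0 := by
  have neighbors : (attachLeaf G w).neighborFinset v =
      (G.neighborFinset v).map (.subtype _) ∪ if w = v then {m} else ∅ := by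
    ext u
    rw [mem_neighborFinset]
    by_cases hu : u = m
    · rw [hu, adj_comm, attachLeaf_adj_leaf]
      split_ifs <;> simp_all [Subtype.ext_iff, eq_comm]
    · rw [attachLeaf_adj_coe (u := v) (v := ⟨u, hu⟩)]
      split_ifs <;> simp [hu]
  have disjoint : Disjoint ((G.neighborFinset v).map (.subtype _)) (if w = v then {m} else ∅) := by
    split_ifs <;> simp
  rw [degree, neighbors, card_union_of_disjoint disjoint, card_map, degree]
  split_ifs <;> rfl

theorem isTree_attachLeaf_iff [Finite V] : (attachLeaf G w).IsTree ↔ G.IsTree := by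
  classical
  have := Fintype.ofFinite V
  rw [← isTree_induce_compl_singleton_iff degree_attachLeaf_leaf, induce_attachLeaf]

open Classical in
/-- Trees with a leaf at `m`, as pairs of a tree on the other vertices and the neighbour of `m`. -/
noncomputable def attachLeafEquiv [Fintype V] (m : V) :
    LabelledTree ({m}ᶜ : Set V) × ({m}ᶜ : Set V) ≃ {T : LabelledTree V // T.1.degree m = 1} :=
  .ofBijective (fun p ↦
      ⟨⟨attachLeaf p.1.1 p.2, isTree_attachLeaf_iff.mpr p.1.2⟩, degree_attachLeaf_leaf⟩) <| by
    constructor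
    · intro p q h
      obtain ⟨hT, hw⟩ := attachLeaf_injective2 (congrArg (·.1.1) h)
      exact Prod.ext (Subtype.ext hT) hw
    · rintro ⟨⟨T, hT⟩, hm⟩
      obtain ⟨w, hw, unique⟩ := degree_eq_one_iff_existsUnique_adj.mp hm
      exact ⟨⟨⟨T.induce {m}ᶜ, (isTree_induce_compl_singleton_iff hm).mpr hT⟩, ⟨w, hw.ne'⟩⟩,
        Subtype.ext <| Subtype.ext <| attachLeaf_induce fun v ↦ ⟨unique v, fun h ↦ h ▸ hw⟩⟩

end Leaf

section Code

variable {V : Type*} {k : ℕ}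

open Classical in
/-- The degree of the vertex `v` in a tree with Prüfer code `s`: one more than the number of
times `v` occurs in `s`. -/
noncomputable def codeDegree (s : Fin k → V) (v : V) : ℕ := #{i | s i = v} + 1

theorem codeDegree_eq_one_iff {s : Fin k → V} {v : V} : codeDegree s v = 1 ↔ ∀ i, s i ≠ v := by
  simp [codeDegree, filter_eq_empty_iff]

theorem codeDegree_cons [DecidableEq V] (w : V) (s : Fin k → V) (v : V) :
    codeDegree (Fin.cons w s : Fin (k + 1) → V) v = codeDegree s v + if w = v then 1 else 0 := by
  simp only [codeDegree, Fin.card_filter_univ_succ', Fin.cons_zero, Fin.cons_succ]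
  grind

theorem codeDegree_comp_of_injective {W : Type*} {f : W → V}
    (hf : f.Injective) (s : Fin k → W) (w : W) : codeDegree (f ∘ s) (f w) = codeDegree s w := by
  simp only [codeDegree, Function.comp_apply]
  congr!
  exact hf.eq_iff

theorem exists_codeDegree_eq_one [Fintype V] (hk : k < Fintype.card V) (s : Fin k → V) :
    ∃ v, codeDegree s v = 1 := by
  simp only [codeDegree_eq_one_iff]
  by_contra! h
  have := Fintype.card_le_of_surjective s h
  rw [Fintype.card_fin] at this
  lia

/-- Codes omitting `m`, as pairs of the tail and the first entry. -/
noncomputable def consCodeEquiv (m : V) (k : ℕ) :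
    (Fin k → ({m}ᶜ : Set V)) × ({m}ᶜ : Set V) ≃ {s : Fin (k + 1) → V // codeDegree s m = 1} :=
  (Equiv.prodComm _ _).trans <| (Fin.consEquiv fun _ ↦ ({m}ᶜ : Set V)).trans <|
    Equiv.subtypePiEquivPi.symm.trans <| Equiv.subtypeEquivRight fun _ ↦ codeDegree_eq_one_iff.symm

theorem codeDegree_consCodeEquiv [DecidableEq V] {m : V} (s : Fin k → ({m}ᶜ : Set V))
    (w v : ({m}ᶜ : Set V)) :
    codeDegree (consCodeEquiv m k (s, w)).1 v = codeDegree s v + if w = v then 1 else 0 := by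
  rw [← codeDegree_cons, ← codeDegree_comp_of_injective Subtype.val_injective]
  rfl

end Code

section Prufer

variable {V : Type*} [Fintype V]

theorem eq_top_of_card_le_two {G : SimpleGraph V} (hV : Fintype.card V ≤ 2)
    (hG : G.Connected) : G = ⊤ := by
  refine top_le_iff.mp fun u v huv ↦ ?_
  have : Nontrivial V := ⟨u, v, huv⟩
  obtain ⟨w, hw⟩ := hG.preconnected.exists_adj_of_nontrivial u
  have : w = v := by
    by_contra hwv
    have := Fintype.two_lt_card_iff.mpr ⟨u, v, w, huv, hw.ne, Ne.symm hwv⟩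
    lia
  exact this ▸ hw

open Classical in
theorem exists_prufer_equiv_zero (hV : Fintype.card V = 2) :
    ∃ e : LabelledTree V ≃ (Fin 0 → V), ∀ T, codeDegree (e T) = (T.1.degree ·) := by
  have : Nonempty V := Fintype.card_pos_iff.mp (by lia)
  have eq_top (T : LabelledTree V) : T.1 = ⊤ := eq_top_of_card_le_two hV.le T.2.connected
  let : Unique (LabelledTree V) :=
    { default := ⟨⊤, connected_top, .of_card_le_two (by simp [hV])⟩
      uniq := fun T ↦ Subtype.ext (eq_top T) }
  refine ⟨.ofUnique _ _, fun T ↦ funext fun v ↦ ?_⟩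
  have degree_eq : T.1.degree v = Fintype.card V - 1 :=
    (T.1.degree_eq_card_sub_one v).mpr fun u hu ↦ by rwa [eq_top T]
  rw [degree_eq, hV, codeDegree_eq_one_iff]
  exact fun i ↦ i.elim0

open Classical in
theorem exists_prufer_equiv_succ_of_leaf {k : ℕ} {m : V}
    (e : LabelledTree ({m}ᶜ : Set V) ≃ (Fin k → ({m}ᶜ : Set V)))
    (he : ∀ T, codeDegree (e T) = (T.1.degree ·)) :
    ∃ e : {T : LabelledTree V // T.1.degree m = 1} ≃ {s : Fin (k + 1) → V // codeDegree s m = 1},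
      ∀ T, codeDegree (e T).1 = (T.1.1.degree ·) := by
  refine ⟨(attachLeafEquiv m).symm.trans <| (e.prodCongr (.refl _)).trans <| consCodeEquiv m k,
    fun T ↦ ?_⟩
  obtain ⟨⟨T, w⟩, rfl⟩ := (attachLeafEquiv m).surjective T
  rw [Equiv.trans_apply, Equiv.symm_apply_apply]
  ext v
  by_cases hv : v = m
  · rw [hv]
    exact (consCodeEquiv m k (e T, w)).2.trans (attachLeafEquiv m (T, w)).2.symm
  · calc codeDegree (consCodeEquiv m k (e T, w)).1 v
      _ = codeDegree (e T) ⟨v, hv⟩ + if w = ⟨v, hv⟩ then 1 else 0 :=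
        codeDegree_consCodeEquiv _ _ ⟨v, hv⟩
      _ = T.1.degree ⟨v, hv⟩ + if w = ⟨v, hv⟩ then 1 else 0 := by rw [he]
      _ = (attachLeafEquiv m (T, w)).1.1.degree v := (degree_attachLeaf_coe ⟨v, hv⟩).symm

open Classical in
theorem exists_prufer_equiv {k : ℕ} (hV : Fintype.card V = k + 2) :
    ∃ e : LabelledTree V ≃ (Fin k → V), ∀ T, codeDegree (e T) = (T.1.degree ·) := by
  induction k generalizing V with
  | zero => exact exists_prufer_equiv_zero hV
  | succ k ih =>
    have : Nontrivial V := Fintype.one_lt_card_iff_nontrivial.mp (by lia)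
    refine exists_equiv_comp_eq_of_forall_subtype (fun m d ↦ d m = 1)
      (fun T ↦ T.2.exists_vert_degree_one_of_nontrivial)
      (exists_codeDegree_eq_one (by lia)) fun m ↦ ?_
    obtain ⟨e, he⟩ := ih (V := ({m}ᶜ : Set V)) <| by
      have := card_compl_singleton_add_one m
      lia
    exact exists_prufer_equiv_succ_of_leaf e he

end Prufer

theorem cayley_general (V : Type*) [Finite V] [Nontrivial V] :
    Nat.card {T : SimpleGraph V // T.IsTree} = Nat.card V ^ (Nat.card V - 2) := by
  have := Fintype.ofFinite V
  obtain ⟨k, hk⟩ := Nat.exists_eq_add_of_le' (Finite.one_lt_card (α := V))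
  obtain ⟨e, -⟩ := exists_prufer_equiv (Nat.card_eq_fintype_card.symm.trans hk)
  rw [Nat.card_congr e, Nat.card_fun, Nat.card_fin, hk, Nat.add_sub_cancel]

/-- Cayley's formula: for `n ≥ 2`, the number of labelled trees on the vertex set `Fin n`
equals `n^(n−2)`. -/
theorem cayley (n : ℕ) (hn : 2 ≤ n) :
    Nat.card {T : SimpleGraph (Fin n) // T.IsTree} = n ^ (n - 2) := by
  have : Nontrivial (Fin n) := Fin.nontrivial_iff_two_le.mpr hn
  simpa using cayley_general (Fin n)
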